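/- Suppose 0 < β < min(α, d). Then there exists a positive constant c₁ such that for all t > 0, x ∈ ℝ^d and R > 0: ∫_{B(x,R)^c × B(x,R)^c} p_t(x−y) p_t(x−w) |y−w|^{−β} dy dw ≤ c₁ t² / R^{2α+β}. -/

import Mathlib

open MeasureTheory Real
open scoped RealInnerProductSpace

/-- The heat kernel of the fractional Laplacian `-ν(-Δ)^(α/2)` on `ℝ^d`:
`p_t(x) = (2π)^{-d} ∫ e^{-i x·z} e^{-tν|z|^α} dz`. -/
noncomputable def stableKernel (d : ℕ) (ν α t : ℝ) (x : EuclideanSpace ℝ (Fin d)) : ℝ :=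
  ((2 * Real.pi) ^ d)⁻¹ *
    (∫ z : EuclideanSpace ℝ (Fin d),
      Complex.exp (-(Complex.I * (⟪x, z⟫ : ℝ))) *
        Complex.exp (-((t * ν * ‖z‖ ^ α : ℝ) : ℂ))).re

/-!
Put `a = α / 2 ≤ 1`. The function `l ↦ e^{-s l^a}` is a pointwise limit of Laplace transforms of
probability measures on `[0, ∞)`, namely of `n`-fold convolutions of Pareto laws (convergence to
the one-sided stable law). At `l = |z|²` this exhibits `e^{-s|z|^α}` as a limit of mixtures of
Gaussians. The Gaussian estimate
`|∫ e^{-i x·z} e^{-v|z|²} dz| = (π/v)^{d/2} e^{-|x|²/(4v)} ≤ C |x|^{-d} (1 - e^{-v l})`, with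
`l = |x|^{-2}`, has a right-hand side affine in `e^{-v l}`, so it survives mixtures and limits and
yields `|p_t(x)| ≤ C |x|^{-d} (1 - e^{-tν|x|^{-α}}) ≤ K t |x|^{-d-α}`. The double integral is
therefore at most `(K t)²` times the integral of `|u|^{-d-α} |v|^{-d-α} |u - v|^{-β}` over
`|u|, |v| ≥ R`, which is finite and, by scaling, proportional to `R^{-2α-β}`.
-/

open Filter Set Metric Module ProbabilityTheory Topology
open scoped Pointwise

/-- `φ` is the Laplace transform of a probability measure carried by `[ε, ∞)`. -/
def IsLaplaceTransform (ε : ℝ) (φ : ℝ → ℝ) : Prop :=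
  ∃ μ : Measure ℝ, IsProbabilityMeasure μ ∧ (∀ᵐ u ∂μ, ε ≤ u) ∧
    φ = fun l => ∫ u, exp (-(u * l)) ∂μ

theorem integrable_exp_neg_mul_of_ae_ge {μ : Measure ℝ} [IsFiniteMeasure μ] {ε l : ℝ}
    (hμ : ∀ᵐ u ∂μ, ε ≤ u) (hl : 0 ≤ l) : Integrable (fun u => exp (-(u * l))) μ := by
  refine Integrable.of_bound (by fun_prop) (exp (-(ε * l))) ?_
  filter_upwards [hμ] with u hu
  rw [norm_of_nonneg (exp_nonneg _)]
  gcongr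

namespace IsLaplaceTransform

variable {δ ε l : ℝ} {φ ψ : ℝ → ℝ}

theorem mono (h : δ ≤ ε) : IsLaplaceTransform ε φ → IsLaplaceTransform δ φ :=
  fun ⟨μ, hprob, hμ, hφ⟩ => ⟨μ, hprob, hμ.mono fun _ hu => h.trans hu, hφ⟩

theorem nonneg (hφ : IsLaplaceTransform ε φ) (l : ℝ) : 0 ≤ φ l := by
  obtain ⟨μ, -, -, rfl⟩ := hφ
  exact integral_nonneg fun u => (exp_pos _).le

theorem le_exp (hφ : IsLaplaceTransform ε φ) (hl : 0 ≤ l) : φ l ≤ exp (-(ε * l)) := by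
  obtain ⟨μ, _, hμ, rfl⟩ := hφ
  calc ∫ u, exp (-(u * l)) ∂μ ≤ ∫ _, exp (-(ε * l)) ∂μ := by
        refine integral_mono_ae (integrable_exp_neg_mul_of_ae_ge hμ hl) (integrable_const _) ?_
        filter_upwards [hμ] with u hu
        gcongr
    _ = exp (-(ε * l)) := by simp

theorem measurable (hφ : IsLaplaceTransform ε φ) : Measurable φ := by
  obtain ⟨μ, _, -, rfl⟩ := hφ
  refine (StronglyMeasurable.integral_prod_right' (f := fun p : ℝ × ℝ => exp (-(p.2 * p.1)))
    (Continuous.stronglyMeasurable ?_)).measurable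
  fun_prop

theorem exp_neg_mul (s : ℝ) : IsLaplaceTransform s fun l => exp (-(s * l)) :=
  ⟨Measure.dirac s, inferInstance, by simp [ae_dirac_eq], by simp⟩

theorem mul (hφ : IsLaplaceTransform δ φ) (hψ : IsLaplaceTransform ε ψ) :
    IsLaplaceTransform (δ + ε) fun l => φ l * ψ l := by
  obtain ⟨μ, _, hμ, rfl⟩ := hφ
  obtain ⟨ν, _, hν, rfl⟩ := hψ
  refine ⟨(μ.prod ν).map fun p => p.1 + p.2, Measure.isProbabilityMeasure_map (by fun_prop),
    ?_, funext fun l => ?_⟩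
  · rw [ae_map_iff (by fun_prop) measurableSet_Ici]
    filter_upwards [Measure.quasiMeasurePreserving_fst.ae hμ,
      Measure.quasiMeasurePreserving_snd.ae hν] with p hp hq
    exact add_le_add hp hq
  · rw [integral_map (by fun_prop) (by fun_prop), ← integral_prod_mul]
    simp only [← exp_add, add_mul, neg_add]

theorem pow (hφ : IsLaplaceTransform 0 φ) (n : ℕ) : IsLaplaceTransform 0 fun l => φ l ^ n := by
  induction n with
  | zero => simpa using exp_neg_mul 0
  | succ n ih => simpa only [pow_succ, add_zero] using ih.mul hφ

end IsLaplaceTransform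

section Pareto

variable {a h l : ℝ}

theorem ae_paretoMeasure_ge (h a : ℝ) : ∀ᵐ u ∂paretoMeasure h a, h ≤ u := by
  rw [paretoMeasure, ae_withDensity_iff (by unfold paretoPDF; fun_prop)]
  exact .of_forall fun u hu => not_lt.mp fun hlt => hu (paretoPDF_of_lt hlt)

theorem integral_paretoMeasure (hh : 0 < h) (ha : 0 < a) (f : ℝ → ℝ) :
    ∫ u, f u ∂paretoMeasure h a = a * h ^ a * ∫ u in Ici h, f u * u ^ (-(a + 1)) := by
  rw [paretoMeasure, integral_withDensity_eq_integral_toReal_smul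
    (by unfold paretoPDF; fun_prop) (by simp [paretoPDF]), ← integral_const_mul,
    ← integral_indicator measurableSet_Ici]
  congr with u
  rw [paretoPDF, ENNReal.toReal_ofReal (paretoPDFReal_nonneg hh.le ha.le u)]
  by_cases hu : h ≤ u
  · simp only [paretoPDFReal, if_pos hu, indicator_of_mem (mem_Ici.mpr hu), smul_eq_mul]
    ring
  · simp [paretoPDFReal, hu]

theorem integrableOn_one_sub_exp_neg_mul_rpow (ha : 0 < a) (ha1 : a < 1) (hl : 0 ≤ l) :
    IntegrableOn (fun u : ℝ => (1 - exp (-(u * l))) * u ^ (-(a + 1))) (Ioi 0) := by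
  have hmeas : Measurable fun u : ℝ => (1 - exp (-(u * l))) * u ^ (-(a + 1)) := by fun_prop
  have hnorm {u : ℝ} (hu : 0 < u) : ‖(1 - exp (-(u * l))) * u ^ (-(a + 1))‖ =
      (1 - exp (-(u * l))) * u ^ (-(a + 1)) :=
    norm_of_nonneg (mul_nonneg
      (sub_nonneg.mpr (exp_le_one_iff.mpr (neg_nonpos.mpr (by positivity)))) (rpow_nonneg hu.le _))
  rw [← Ioc_union_Ioi_eq_Ioi zero_le_one]
  refine IntegrableOn.union ?near_zero ?tail
  case near_zero =>
    have hdom : IntegrableOn (fun u : ℝ => l * u ^ (-a)) (Ioc 0 1) :=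
      ((intervalIntegrable_iff_integrableOn_Ioc_of_le zero_le_one).mp
        (intervalIntegral.intervalIntegrable_rpow' (by linarith))).const_mul l
    refine hdom.mono' hmeas.aestronglyMeasurable
      ((ae_restrict_iff' measurableSet_Ioc).mpr (.of_forall fun u hu => ?_))
    have hu0 : 0 < u := hu.1
    calc ‖(1 - exp (-(u * l))) * u ^ (-(a + 1))‖
        = (1 - exp (-(u * l))) * u ^ (-(a + 1)) := hnorm hu0
      _ ≤ u * l * u ^ (-(a + 1)) := by
          gcongr
          linarith [one_sub_le_exp_neg (u * l)]
      _ = l * u ^ (-a) := by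
          rw [show -a = 1 + -(a + 1) by ring, rpow_add hu0, rpow_one]
          ring
  case tail =>
    have hdom : IntegrableOn (fun u : ℝ => u ^ (-(a + 1))) (Ioi 1) :=
      integrableOn_Ioi_rpow_of_lt (by linarith) one_pos
    refine hdom.mono' hmeas.aestronglyMeasurable
      ((ae_restrict_iff' measurableSet_Ioi).mpr (.of_forall fun u hu => ?_))
    have hu0 : 0 < u := one_pos.trans hu
    rw [hnorm hu0]
    exact mul_le_of_le_one_left (rpow_nonneg hu0.le _) (by linarith [exp_pos (-(u * l))])

theorem integral_one_sub_exp_neg_mul_rpow (ha : 0 < a) (hl : 0 ≤ l) :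
    ∫ u in Ioi (0 : ℝ), (1 - exp (-(u * l))) * u ^ (-(a + 1)) =
      l ^ a * ∫ u in Ioi (0 : ℝ), (1 - exp (-u)) * u ^ (-(a + 1)) := by
  rcases hl.eq_or_lt with rfl | hl
  · simp [zero_rpow ha.ne']
  calc ∫ u in Ioi (0 : ℝ), (1 - exp (-(u * l))) * u ^ (-(a + 1))
      = l ^ (a + 1) * ∫ u in Ioi (0 : ℝ), (1 - exp (-(l * u))) * (l * u) ^ (-(a + 1)) := by
        rw [← integral_const_mul]
        refine setIntegral_congr_fun measurableSet_Ioi fun u hu => ?_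
        rw [mul_rpow hl.le (mem_Ioi.mp hu).le, rpow_neg hl.le, mul_comm l u]
        field_simp
    _ = l ^ (a + 1) * (l⁻¹ * ∫ u in Ioi (0 : ℝ), (1 - exp (-u)) * u ^ (-(a + 1))) := by
        rw [integral_comp_mul_left_Ioi (fun u => (1 - exp (-u)) * u ^ (-(a + 1))) 0 hl,
          mul_zero, smul_eq_mul]
    _ = l ^ a * ∫ u in Ioi (0 : ℝ), (1 - exp (-u)) * u ^ (-(a + 1)) := by
        rw [rpow_add_one hl.ne']
        field_simp

theorem integral_one_sub_exp_neg_mul_rpow_pos (ha : 0 < a) (ha1 : a < 1) :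
    0 < ∫ u in Ioi (0 : ℝ), (1 - exp (-u)) * u ^ (-(a + 1)) := by
  have hpos : ∀ u ∈ Ioi (0 : ℝ), 0 < (1 - exp (-u)) * u ^ (-(a + 1)) := fun u hu =>
    mul_pos (sub_pos.mpr (Real.exp_lt_one_iff.mpr (neg_lt_zero.mpr hu))) (rpow_pos_of_pos hu _)
  rw [setIntegral_pos_iff_support_of_nonneg_ae
    ((ae_restrict_iff' measurableSet_Ioi).mpr (.of_forall fun u hu => (hpos u hu).le))
    (by simpa using integrableOn_one_sub_exp_neg_mul_rpow ha ha1 zero_le_one)]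
  exact (by simp : (0 : ENNReal) < volume (Ioi (0 : ℝ))).trans_le
    (measure_mono fun u hu => ⟨(hpos u hu).ne', hu⟩)

theorem one_sub_integral_exp_paretoMeasure (hh : 0 < h) (ha : 0 < a) (hl : 0 ≤ l) :
    1 - ∫ u, exp (-(u * l)) ∂paretoMeasure h a =
      a * h ^ a * ∫ u in Ici h, (1 - exp (-(u * l))) * u ^ (-(a + 1)) := by
  have := isProbabilityMeasure_paretoMeasure hh ha
  rw [← integral_paretoMeasure hh ha, integral_sub (integrable_const _)
    (integrable_exp_neg_mul_of_ae_ge (ae_paretoMeasure_ge h a) hl)]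
  simp

theorem tendsto_integral_Ici_one_sub_exp_neg_mul_rpow (ha : 0 < a) (ha1 : a < 1) (hl : 0 ≤ l)
    {h : ℕ → ℝ} (hh : ∀ᶠ n in atTop, 0 < h n) (hlim : Tendsto h atTop (𝓝 0)) :
    Tendsto (fun n => ∫ u in Ici (h n), (1 - exp (-(u * l))) * u ^ (-(a + 1))) atTop
      (𝓝 (l ^ a * ∫ u in Ioi (0 : ℝ), (1 - exp (-u)) * u ^ (-(a + 1)))) := by
  rw [← integral_one_sub_exp_neg_mul_rpow ha hl]
  refine ((aecover_Ioi_of_Ici hlim).integral_tendsto_of_countably_generated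
    (integrableOn_one_sub_exp_neg_mul_rpow ha ha1 hl)).congr' ?_
  filter_upwards [hh] with n hn
  rw [Measure.restrict_restrict measurableSet_Ici,
    inter_eq_left.mpr (Ici_subset_Ioi.mpr hn)]

/-- The scale `h` is chosen so that the sum of `n` independent Pareto variables converges in law
to the one-sided stable variable with Laplace transform `exp (-(s * l ^ a))`. -/
theorem exists_tendsto_integral_exp_paretoMeasure_pow {s : ℝ} (ha : 0 < a) (ha1 : a < 1)
    (hs : 0 < s) : ∃ h : ℕ → ℝ, (∀ n ≠ 0, 0 < h n) ∧ ∀ l, 0 ≤ l →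
      Tendsto (fun n => (∫ u, exp (-(u * l)) ∂paretoMeasure (h n) a) ^ n) atTop
        (𝓝 (exp (-(s * l ^ a)))) := by
  set c := ∫ u in Ioi (0 : ℝ), (1 - exp (-u)) * u ^ (-(a + 1))
  have hc : 0 < c := integral_one_sub_exp_neg_mul_rpow_pos ha ha1
  set h : ℕ → ℝ := fun n => (s / (a * c) / n) ^ a⁻¹
  have hpos (n : ℕ) (hn : n ≠ 0) : 0 < h n := by positivity
  have hpos_ev : ∀ᶠ n in atTop, 0 < h n := (eventually_ne_atTop 0).mono hpos
  have hlim : Tendsto h atTop (𝓝 0) := by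
    simpa [zero_rpow (inv_pos.mpr ha).ne'] using
      (tendsto_const_div_atTop_nhds_zero_nat (s / (a * c))).rpow_const
        (p := a⁻¹) (.inr (inv_pos.mpr ha).le)
  refine ⟨h, hpos, fun l hl => ?_⟩
  have hlog : Tendsto (fun n : ℕ => n * ((∫ u, exp (-(u * l)) ∂paretoMeasure (h n) a) - 1))
      atTop (𝓝 (-(s * l ^ a))) := by
    have htend := (tendsto_integral_Ici_one_sub_exp_neg_mul_rpow ha ha1 hl hpos_ev hlim).const_mul
      (-(s / c))
    rw [show -(s / c) * (l ^ a * c) = -(s * l ^ a) by field_simp] at htend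
    refine htend.congr' ?_
    filter_upwards [eventually_ne_atTop 0] with n hn
    have hha : h n ^ a = s / (a * c) / n := rpow_inv_rpow (by positivity) ha.ne'
    rw [← neg_sub, one_sub_integral_exp_paretoMeasure (hpos n hn) ha hl, hha]
    generalize ∫ u in Ici (h n), (1 - exp (-(u * l))) * u ^ (-(a + 1)) = J
    field_simp
  simpa using tendsto_one_add_pow_exp_of_tendsto hlog

end Pareto

theorem exists_isLaplaceTransform_tendsto_exp_neg_rpow {a s : ℝ} (ha : 0 < a) (ha1 : a ≤ 1)
    (hs : 0 < s) : ∃ φ : ℕ → ℝ → ℝ, (∀ n, IsLaplaceTransform 0 (φ n)) ∧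
      ∀ l, 0 ≤ l → Tendsto (fun n => φ n l) atTop (𝓝 (exp (-(s * l ^ a)))) := by
  rcases ha1.eq_or_lt with rfl | ha1
  · exact ⟨fun _ l => exp (-(s * l)), fun _ => (IsLaplaceTransform.exp_neg_mul s).mono hs.le,
      fun l _ => by simp⟩
  obtain ⟨h, hpos, hlim⟩ := exists_tendsto_integral_exp_paretoMeasure_pow ha ha1 hs
  refine ⟨fun n l => (∫ u, exp (-(u * l)) ∂paretoMeasure (h (n + 1)) a) ^ (n + 1), fun n => ?_,
    fun l hl => (tendsto_add_atTop_iff_nat 1).mpr (hlim l hl)⟩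
  have hh : 0 < h (n + 1) := hpos _ n.succ_ne_zero
  have hpareto : IsLaplaceTransform (h (n + 1))
      fun l => ∫ u, exp (-(u * l)) ∂paretoMeasure (h (n + 1)) a :=
    ⟨_, isProbabilityMeasure_paretoMeasure hh ha, ae_paretoMeasure_ge _ a, rfl⟩
  exact (hpareto.mono hh.le).pow (n + 1)

theorem rpow_mul_exp_neg_mul_le {q b w : ℝ} (hq : 0 ≤ q) (hb : 0 < b) (hw : 0 ≤ w) :
    w ^ q * exp (-(b * w)) ≤ (q / b) ^ q := by
  rcases hq.eq_or_lt with rfl | hq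
  · simpa using mul_nonneg hb.le hw
  have hexp : b * w / q ≤ exp (b * w / q) := by linarith [add_one_le_exp (b * w / q)]
  calc w ^ q * exp (-(b * w))
      = (q / b) ^ q * (b * w / q) ^ q * exp (-(b * w)) := by
        rw [← mul_rpow (by positivity) (by positivity)]
        congr 2
        field_simp
    _ ≤ (q / b) ^ q * exp (b * w / q) ^ q * exp (-(b * w)) := by gcongr
    _ = (q / b) ^ q := by
        rw [← exp_mul, div_mul_cancel₀ _ hq.ne', mul_assoc, ← exp_add, add_neg_cancel, exp_zero,
          mul_one]

theorem inv_one_add_le_one_sub_exp_neg_inv {w : ℝ} (hw : 0 < w) :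
    (1 + w)⁻¹ ≤ 1 - exp (-w⁻¹) := by
  have hexp : exp (-w⁻¹) ≤ (1 + w⁻¹)⁻¹ := by
    rw [exp_neg]
    gcongr
    linarith [add_one_le_exp w⁻¹]
  calc (1 + w)⁻¹ = 1 - (1 + w⁻¹)⁻¹ := by
        field_simp
        ring
    _ ≤ 1 - exp (-w⁻¹) := by gcongr

theorem exists_rpow_mul_exp_neg_mul_le {q b : ℝ} (hq : 0 ≤ q) (hb : 0 < b) :
    ∃ K > 0, ∀ w > 0, w ^ q * exp (-(b * w)) ≤ K * (1 - exp (-w⁻¹)) := by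
  refine ⟨(q / b) ^ q + ((q + 1) / b) ^ (q + 1), by positivity, fun w hw => ?_⟩
  calc w ^ q * exp (-(b * w))
      = (w ^ q * exp (-(b * w)) + w ^ (q + 1) * exp (-(b * w))) * (1 + w)⁻¹ := by
        rw [rpow_add_one hw.ne']
        field_simp
    _ ≤ ((q / b) ^ q + ((q + 1) / b) ^ (q + 1)) * (1 - exp (-w⁻¹)) := by
        gcongr
        · exact rpow_mul_exp_neg_mul_le hq hb hw.le
        · exact rpow_mul_exp_neg_mul_le (by positivity) hb hw.le
        · exact inv_one_add_le_one_sub_exp_neg_inv hw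

section AngularFourier

variable {E : Type*} [NormedAddCommGroup E] [InnerProductSpace ℝ E]

theorem norm_exp_neg_I_mul_inner (x z : E) :
    ‖Complex.exp (-(Complex.I * (⟪x, z⟫ : ℝ)))‖ = 1 := by
  simp [Complex.norm_exp]

variable [FiniteDimensional ℝ E] [MeasurableSpace E] [BorelSpace E]

/-- The Fourier integral `∫ e^{-i x·z} f z dz` in the angular-frequency convention of
`stableKernel`, without the factor `(2π)^{-d}`; Mathlib's `𝓕` has `e^{-2π i x·z}` instead. -/
noncomputable def angularFourier (f : E → ℝ) (x : E) : ℂ :=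
  ∫ z, Complex.exp (-(Complex.I * (⟪x, z⟫ : ℝ))) * f z

theorem tendsto_angularFourier {F : ℕ → E → ℝ} {f g : E → ℝ} (hF : ∀ n, Measurable (F n))
    (hg : Integrable g) (hbound : ∀ n z, ‖F n z‖ ≤ g z)
    (hlim : ∀ z, Tendsto (fun n => F n z) atTop (𝓝 (f z))) (x : E) :
    Tendsto (fun n => angularFourier (F n) x) atTop (𝓝 (angularFourier f x)) := by
  refine tendsto_integral_of_dominated_convergence g (fun n => ?_) hg
    (fun n => .of_forall fun z => ?_) (.of_forall fun z => ?_)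
  · exact (Measurable.mul (by fun_prop)
      (Complex.measurable_ofReal.comp (hF n))).aestronglyMeasurable
  · rw [norm_mul, norm_exp_neg_I_mul_inner, one_mul, Complex.norm_real]
    exact hbound n z
  · exact ((Complex.continuous_ofReal.tendsto _).comp (hlim z)).const_mul _

theorem integrable_exp_neg_mul_norm_sq {v : ℝ} (hv : 0 < v) :
    Integrable fun z : E => exp (-(v * ‖z‖ ^ 2)) := by
  simpa [Complex.norm_exp, ← Complex.ofReal_pow] using
    (GaussianFourier.integrable_cexp_neg_mul_sq_norm_add (V := E) (b := v) (by simpa) 0 0).norm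

theorem norm_angularFourier_exp_neg_mul_norm_sq {v : ℝ} (hv : 0 < v) (x : E) :
    ‖angularFourier (fun z : E => exp (-(v * ‖z‖ ^ 2))) x‖ =
      (π / v) ^ (finrank ℝ E / 2 : ℝ) * exp (-(‖x‖ ^ 2 / (4 * v))) := by
  have hgauss : angularFourier (fun z : E => exp (-(v * ‖z‖ ^ 2))) x =
      ((π / v : ℝ) : ℂ) ^ (finrank ℝ E / 2 : ℂ) *
        Complex.exp ((-(‖x‖ ^ 2 / (4 * v)) : ℝ) : ℂ) := by
    have h := GaussianFourier.integral_cexp_neg_mul_sq_norm_add (V := E) (b := v)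
      (by simpa using hv) (-Complex.I) x
    simp only [angularFourier, Complex.ofReal_exp, ← Complex.exp_add]
    convert h using 1
    · congr with z
      push_cast
      ring_nf
    · push_cast
      rw [neg_sq, Complex.I_sq]
      ring_nf
  rw [hgauss, norm_mul, Complex.norm_cpow_eq_rpow_re_of_pos (by positivity), Complex.norm_exp,
    Complex.ofReal_re]
  simp

theorem exists_norm_angularFourier_exp_neg_mul_norm_sq_le :
    ∃ C > 0, ∀ v > 0, ∀ x : E, x ≠ 0 → ‖angularFourier (fun z : E => exp (-(v * ‖z‖ ^ 2))) x‖ ≤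
      C * ‖x‖ ^ (-(finrank ℝ E : ℝ)) * (1 - exp (-(v * ‖x‖ ^ (-2 : ℝ)))) := by
  obtain ⟨K, hK, hbound⟩ := exists_rpow_mul_exp_neg_mul_le (q := finrank ℝ E / 2) (b := 1 / 4)
    (by positivity) (by positivity)
  refine ⟨π ^ (finrank ℝ E / 2 : ℝ) * K, by positivity, fun v hv x hx => ?_⟩
  have hx0 : 0 < ‖x‖ := norm_pos_iff.mpr hx
  set q : ℝ := finrank ℝ E / 2
  calc ‖angularFourier (fun z : E => exp (-(v * ‖z‖ ^ 2))) x‖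
      = (π / v) ^ q * exp (-(‖x‖ ^ 2 / (4 * v))) := norm_angularFourier_exp_neg_mul_norm_sq hv x
    _ = π ^ q * ‖x‖ ^ (-(finrank ℝ E : ℝ)) *
          ((‖x‖ ^ 2 / v) ^ q * exp (-(1 / 4 * (‖x‖ ^ 2 / v)))) := by
        have hpow : ‖x‖ ^ (-(finrank ℝ E : ℝ)) = ((‖x‖ ^ 2) ^ q)⁻¹ := by
          rw [rpow_neg hx0.le, ← rpow_natCast_mul hx0.le]
          congr 2
          simp only [q]
          push_cast
          ring
        rw [hpow, div_rpow pi_nonneg hv.le, div_rpow (by positivity) hv.le]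
        field_simp
    _ ≤ π ^ q * ‖x‖ ^ (-(finrank ℝ E : ℝ)) * (K * (1 - exp (-(‖x‖ ^ 2 / v)⁻¹))) := by
        exact mul_le_mul_of_nonneg_left (hbound _ (by positivity)) (by positivity)
    _ = π ^ q * K * ‖x‖ ^ (-(finrank ℝ E : ℝ)) * (1 - exp (-(v * ‖x‖ ^ (-2 : ℝ)))) := by
        have hinv : (‖x‖ ^ 2 / v)⁻¹ = v * ‖x‖ ^ (-2 : ℝ) := by
          rw [inv_div, div_eq_mul_inv, rpow_neg hx0.le, rpow_two]
        rw [hinv]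
        ring

theorem angularFourier_integral_exp_neg_mul_norm_sq {μ : Measure ℝ} [IsFiniteMeasure μ] {ε : ℝ}
    (hε : 0 < ε) (hμ : ∀ᵐ u ∂μ, ε ≤ u) (x : E) :
    angularFourier (fun z : E => ∫ u, exp (-(u * ‖z‖ ^ 2)) ∂μ) x =
      ∫ u, angularFourier (fun z : E => exp (-(u * ‖z‖ ^ 2))) x ∂μ := by
  have hint : Integrable (Function.uncurry fun (z : E) (u : ℝ) =>
      Complex.exp (-(Complex.I * (⟪x, z⟫ : ℝ))) * (exp (-(u * ‖z‖ ^ 2)) : ℝ))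
      (volume.prod μ) := by
    refine ((integrable_exp_neg_mul_norm_sq hε).mul_prod (integrable_const (μ := μ) 1)).mono'
      (Continuous.aestronglyMeasurable (by unfold Function.uncurry; fun_prop)) ?_
    filter_upwards [Measure.quasiMeasurePreserving_snd.ae hμ] with p hp
    rw [Function.uncurry, norm_mul, norm_exp_neg_I_mul_inner, one_mul, mul_one,
      Complex.norm_of_nonneg (exp_nonneg _)]
    gcongr
  simp only [angularFourier, ← integral_complex_ofReal, ← integral_const_mul]
  exact integral_integral_swap hint

variable {x : E} {B l : ℝ}

theorem IsLaplaceTransform.norm_angularFourier_le {φ : ℝ → ℝ} {ε : ℝ}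
    (hφ : IsLaplaceTransform ε φ) (hε : 0 < ε) (hl : 0 ≤ l)
    (hgauss : ∀ v > 0,
      ‖angularFourier (fun z : E => exp (-(v * ‖z‖ ^ 2))) x‖ ≤ B * (1 - exp (-(v * l)))) :
    ‖angularFourier (fun z : E => φ (‖z‖ ^ 2)) x‖ ≤ B * (1 - φ l) := by
  obtain ⟨μ, _, hμ, rfl⟩ := hφ
  have hint : Integrable (fun u => exp (-(u * l))) μ := integrable_exp_neg_mul_of_ae_ge hμ hl
  calc ‖angularFourier (fun z : E => ∫ u, exp (-(u * ‖z‖ ^ 2)) ∂μ) x‖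
      = ‖∫ u, angularFourier (fun z : E => exp (-(u * ‖z‖ ^ 2))) x ∂μ‖ := by
        rw [angularFourier_integral_exp_neg_mul_norm_sq hε hμ]
    _ ≤ ∫ u, B * (1 - exp (-(u * l))) ∂μ :=
        norm_integral_le_of_norm_le (((integrable_const 1).sub hint).const_mul B)
          (hμ.mono fun u hu => hgauss u (hε.trans_le hu))
    _ = B * (1 - ∫ u, exp (-(u * l)) ∂μ) := by
        rw [integral_const_mul, integral_sub (integrable_const 1) hint]
        simp

/-- The Gaussian factor dominates the whole sequence: only `φ n ≤ 1` is known uniformly in `n`. -/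
theorem norm_angularFourier_mul_exp_le_of_tendsto {φ : ℕ → ℝ → ℝ} {ψ : ℝ → ℝ} {ε : ℝ}
    (hε : 0 < ε) (hφ : ∀ n, IsLaplaceTransform 0 (φ n))
    (hlim : ∀ l, 0 ≤ l → Tendsto (fun n => φ n l) atTop (𝓝 (ψ l))) (hl : 0 ≤ l)
    (hgauss : ∀ v > 0,
      ‖angularFourier (fun z : E => exp (-(v * ‖z‖ ^ 2))) x‖ ≤ B * (1 - exp (-(v * l)))) :
    ‖angularFourier (fun z : E => ψ (‖z‖ ^ 2) * exp (-(ε * ‖z‖ ^ 2))) x‖ ≤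
      B * (1 - ψ l * exp (-(ε * l))) := by
  have hφε (n : ℕ) : IsLaplaceTransform ε fun l => φ n l * exp (-(ε * l)) := by
    simpa using (hφ n).mul (.exp_neg_mul ε)
  have hlimε (l : ℝ) (hl : 0 ≤ l) :
      Tendsto (fun n => φ n l * exp (-(ε * l))) atTop (𝓝 (ψ l * exp (-(ε * l)))) :=
    (hlim l hl).mul_const _
  have hdom (n : ℕ) (z : E) :
      ‖φ n (‖z‖ ^ 2) * exp (-(ε * ‖z‖ ^ 2))‖ ≤ exp (-(ε * ‖z‖ ^ 2)) := by
    rw [norm_of_nonneg ((hφε n).nonneg _)]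
    exact (hφε n).le_exp (by positivity)
  have hFourier := tendsto_angularFourier (fun n => (hφε n).measurable.comp (by fun_prop))
    (integrable_exp_neg_mul_norm_sq hε) hdom (fun z => hlimε _ (by positivity)) x
  exact le_of_tendsto_of_tendsto' hFourier.norm (((hlimε l hl).const_sub 1).const_mul B)
    fun n => (hφε n).norm_angularFourier_le hε hl hgauss

theorem norm_angularFourier_le_of_tendsto {φ : ℕ → ℝ → ℝ} {ψ : ℝ → ℝ}
    (hφ : ∀ n, IsLaplaceTransform 0 (φ n))
    (hlim : ∀ l, 0 ≤ l → Tendsto (fun n => φ n l) atTop (𝓝 (ψ l)))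
    (hψ : Measurable ψ) (hψint : Integrable fun z : E => ψ (‖z‖ ^ 2)) (hl : 0 ≤ l)
    (hgauss : ∀ v > 0,
      ‖angularFourier (fun z : E => exp (-(v * ‖z‖ ^ 2))) x‖ ≤ B * (1 - exp (-(v * l)))) :
    ‖angularFourier (fun z : E => ψ (‖z‖ ^ 2)) x‖ ≤ B * (1 - ψ l) := by
  set ε : ℕ → ℝ := fun n => 1 / ((n : ℝ) + 1)
  have hε (n : ℕ) : 0 < ε n := by positivity
  have hεlim (c l : ℝ) : Tendsto (fun n => c * exp (-(ε n * l))) atTop (𝓝 c) := by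
    have hexp : Tendsto (fun y : ℝ => c * exp (-(y * l))) (𝓝 0) (𝓝 c) :=
      Continuous.tendsto' (by fun_prop) _ _ (by simp)
    exact hexp.comp tendsto_one_div_add_atTop_nhds_zero_nat
  refine le_of_tendsto_of_tendsto'
    (tendsto_angularFourier (fun n => ?_) hψint.norm (fun n z => ?_) (fun z => hεlim _ _) x).norm
    (((hεlim (ψ l) l).const_sub 1).const_mul B)
    (fun n => norm_angularFourier_mul_exp_le_of_tendsto (hε n) hφ hlim hl hgauss)
  · fun_prop
  · rw [norm_mul, norm_of_nonneg (exp_nonneg _)]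
    refine mul_le_of_le_one_right (norm_nonneg _) (exp_le_one_iff.mpr (neg_nonpos.mpr ?_))
    have := hε n
    positivity

theorem integrable_exp_neg_mul_norm_rpow [Nontrivial E] {s α : ℝ} (hs : 0 < s) (hα : 0 < α) :
    Integrable fun z : E => exp (-(s * ‖z‖ ^ α)) := by
  refine (integrable_fun_norm_addHaar volume (f := fun r => exp (-(s * r ^ α)))).mpr ?_
  refine (integrableOn_rpow_mul_exp_neg_mul_rpow (s := (finrank ℝ E - 1 : ℕ)) (p := α) (b := s)
    (by linarith [(finrank ℝ E - 1 : ℕ).cast_nonneg (α := ℝ)]) hα hs).congr_fun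
    (fun r _ => ?_) measurableSet_Ioi
  simp only [rpow_natCast, smul_eq_mul, neg_mul]

theorem exists_norm_angularFourier_exp_neg_mul_norm_rpow_le {α : ℝ} (hα : 0 < α) (hα2 : α ≤ 2) :
    ∃ C > 0, ∀ s > 0, ∀ x : E, x ≠ 0 →
      ‖angularFourier (fun z : E => exp (-(s * ‖z‖ ^ α))) x‖ ≤
        C * s * ‖x‖ ^ (-(finrank ℝ E + α)) := by
  obtain ⟨C, hC, hgauss⟩ := exists_norm_angularFourier_exp_neg_mul_norm_sq_le (E := E)
  refine ⟨C, hC, fun s hs x hx => ?_⟩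
  have : Nontrivial E := nontrivial_of_ne x 0 hx
  have hx0 : 0 < ‖x‖ := norm_pos_iff.mpr hx
  have hsq (z : E) : (‖z‖ ^ 2) ^ (α / 2) = ‖z‖ ^ α := by
    rw [← rpow_natCast_mul (norm_nonneg z)]
    congr 1
    push_cast
    ring
  obtain ⟨φ, hφ, hlim⟩ :=
    exists_isLaplaceTransform_tendsto_exp_neg_rpow (half_pos hα) (by linarith : α / 2 ≤ 1) hs
  have hbound := norm_angularFourier_le_of_tendsto hφ hlim (by fun_prop)
    (by simpa only [hsq] using integrable_exp_neg_mul_norm_rpow (E := E) hs hα)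
    (rpow_nonneg hx0.le (-2)) (fun v hv => hgauss v hv x hx)
  rw [← rpow_mul hx0.le, show -2 * (α / 2) = -α by ring] at hbound
  simp only [hsq] at hbound
  calc ‖angularFourier (fun z : E => exp (-(s * ‖z‖ ^ α))) x‖
      ≤ C * ‖x‖ ^ (-(finrank ℝ E : ℝ)) * (1 - exp (-(s * ‖x‖ ^ (-α)))) := hbound
    _ ≤ C * ‖x‖ ^ (-(finrank ℝ E : ℝ)) * (s * ‖x‖ ^ (-α)) := by
        gcongr
        linarith [one_sub_le_exp_neg (s * ‖x‖ ^ (-α))]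
    _ = C * s * ‖x‖ ^ (-(finrank ℝ E + α)) := by
        rw [neg_add, rpow_add hx0]
        ring

end AngularFourier

theorem exists_abs_stableKernel_le (d : ℕ) {ν α : ℝ} (hν : 0 < ν) (hα : 0 < α)
    (hα2 : α ≤ 2) : ∃ K > 0, ∀ t > 0, ∀ x : EuclideanSpace ℝ (Fin d), x ≠ 0 →
      |stableKernel d ν α t x| ≤ K * t * ‖x‖ ^ (-(d + α)) := by
  obtain ⟨C, hC, hbound⟩ := exists_norm_angularFourier_exp_neg_mul_norm_rpow_le
    (E := EuclideanSpace ℝ (Fin d)) hα hα2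
  rw [finrank_euclideanSpace_fin] at hbound
  have hkernel (t : ℝ) (x : EuclideanSpace ℝ (Fin d)) : stableKernel d ν α t x =
      ((2 * π) ^ d)⁻¹ * (angularFourier (fun z => exp (-(t * ν * ‖z‖ ^ α))) x).re := by
    simp only [stableKernel, angularFourier, Complex.ofReal_exp, Complex.ofReal_neg]
  refine ⟨((2 * π) ^ d)⁻¹ * (C * ν), by positivity, fun t ht x hx => ?_⟩
  calc |stableKernel d ν α t x|
      = ((2 * π) ^ d)⁻¹ * |(angularFourier (fun z => exp (-(t * ν * ‖z‖ ^ α))) x).re| := by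
        rw [hkernel, abs_mul, abs_of_pos (by positivity)]
    _ ≤ ((2 * π) ^ d)⁻¹ * (C * (t * ν) * ‖x‖ ^ (-(d + α))) := by
        gcongr
        exact (Complex.abs_re_le_norm _).trans (hbound (t * ν) (by positivity) x hx)
    _ = ((2 * π) ^ d)⁻¹ * (C * ν) * t * ‖x‖ ^ (-(d + α)) := by ring

section TailCorr

variable {E : Type*} [NormedAddCommGroup E] {γ β R : ℝ}

/-- The correlation integrand with each heat kernel replaced by the power tail `‖·‖ ^ (-γ)`
that dominates it. -/
noncomputable def tailCorr (γ β : ℝ) (p : E × E) : ℝ :=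
  ‖p.1‖ ^ (-γ) * ‖p.2‖ ^ (-γ) * ‖p.1 - p.2‖ ^ (-β)

theorem tailCorr_nonneg (γ β : ℝ) (p : E × E) : 0 ≤ tailCorr γ β p := by
  unfold tailCorr
  positivity

theorem tailCorr_le (hβ : 0 ≤ β) (hγ : 0 ≤ γ) (hR : 0 < R) {p : E × E}
    (hp : p ∈ (ball (0 : E) R)ᶜ ×ˢ (ball (0 : E) R)ᶜ) :
    tailCorr γ β p ≤ R ^ (-β) * (‖p.1‖ ^ (-γ) * ‖p.2‖ ^ (-γ)) +
      R ^ (-γ) * (‖p.2‖ ^ (-γ) * (ball (0 : E) R).indicator (fun u => ‖u‖ ^ (-β)) (p.1 - p.2)) := by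
  obtain ⟨hp1, -⟩ : R ≤ ‖p.1‖ ∧ R ≤ ‖p.2‖ := by simpa using hp
  by_cases hnear : p.1 - p.2 ∈ ball (0 : E) R
  · have hfst : ‖p.1‖ ^ (-γ) ≤ R ^ (-γ) := rpow_le_rpow_of_nonpos hR hp1 (by linarith)
    rw [indicator_of_mem hnear, tailCorr, mul_assoc]
    refine le_add_of_nonneg_of_le (by positivity) ?_
    gcongr
  · have hdist : ‖p.1 - p.2‖ ^ (-β) ≤ R ^ (-β) :=
      rpow_le_rpow_of_nonpos hR (by simpa using hnear) (by linarith)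
    rw [indicator_of_notMem hnear, mul_zero, mul_zero, add_zero, tailCorr, mul_comm (R ^ (-β))]
    gcongr

variable [NormedSpace ℝ E]

theorem tailCorr_smul (hR : 0 < R) (p : E × E) :
    tailCorr γ β (R • p) = R ^ (-(2 * γ + β)) * tailCorr γ β p := by
  simp only [tailCorr, Prod.smul_fst, Prod.smul_snd, ← smul_sub, norm_smul, norm_of_nonneg hR.le,
    mul_rpow hR.le (norm_nonneg _)]
  rw [show -(2 * γ + β) = -γ + -γ + -β by ring, rpow_add hR, rpow_add hR]
  ring

variable [FiniteDimensional ℝ E] [MeasurableSpace E] [BorelSpace E] (μ : Measure E)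
  [μ.IsAddHaarMeasure]

theorem integrableOn_norm_rpow_compl_ball (hγ : finrank ℝ E < γ) (hR : 0 < R) :
    IntegrableOn (fun u : E => ‖u‖ ^ (-γ)) (ball 0 R)ᶜ μ := by
  refine ((integrable_one_add_norm (μ := μ) hγ).const_mul
    ((1 + R⁻¹) ^ γ)).integrableOn.mono' (Measurable.aestronglyMeasurable (by fun_prop))
    ((ae_restrict_iff' measurableSet_ball.compl).mpr (.of_forall fun u hu => ?_))
  have hRu : R ≤ ‖u‖ := by simpa using hu
  have hu0 : 0 < ‖u‖ := hR.trans_le hRu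
  have hnorm : 1 + ‖u‖ ≤ (1 + R⁻¹) * ‖u‖ := by
    have : 1 ≤ R⁻¹ * ‖u‖ := (one_le_inv_mul₀ hR).mpr hRu
    linarith
  have hγ0 : 0 ≤ γ := (Nat.cast_nonneg _).trans hγ.le
  rw [norm_of_nonneg (by positivity), rpow_neg (norm_nonneg u), rpow_neg (by positivity),
    ← div_eq_mul_inv, le_div_iff₀ (by positivity), inv_mul_le_iff₀ (by positivity), mul_comm,
    ← mul_rpow (by positivity) (by positivity)]
  gcongr

theorem integrableOn_tailCorr (hγ : finrank ℝ E < γ) (hβ : 0 ≤ β) (hβE : β < finrank ℝ E)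
    (hR : 0 < R) :
    IntegrableOn (tailCorr γ β) ((ball (0 : E) R)ᶜ ×ˢ (ball (0 : E) R)ᶜ) (μ.prod μ) := by
  have htail : IntegrableOn (fun u : E => ‖u‖ ^ (-γ)) (ball 0 R)ᶜ μ :=
    integrableOn_norm_rpow_compl_ball μ hγ hR
  have hnear : IntegrableOn (fun u : E => ‖u‖ ^ (-β)) (ball 0 R) μ :=
    integrableOn_ball_of_norm_le_rpow (C := 1) (by exact_mod_cast hβ.trans_lt hβE) hβE
      (.of_forall fun u => by rw [one_mul, norm_of_nonneg (by positivity)])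
      (Measurable.aestronglyMeasurable (by fun_prop))
  have hfar : IntegrableOn (fun p : E × E => ‖p.1‖ ^ (-γ) * ‖p.2‖ ^ (-γ))
      ((ball (0 : E) R)ᶜ ×ˢ (ball (0 : E) R)ᶜ) (μ.prod μ) := by
    rw [IntegrableOn, ← Measure.prod_restrict]
    exact htail.mul_prod htail
  have hconv : IntegrableOn (fun p : E × E =>
        ‖p.2‖ ^ (-γ) * (ball (0 : E) R).indicator (fun u => ‖u‖ ^ (-β)) (p.1 - p.2))
      ((ball (0 : E) R)ᶜ ×ˢ (ball (0 : E) R)ᶜ) (μ.prod μ) := by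
    rw [IntegrableOn, ← Measure.prod_restrict]
    exact (Integrable.convolution_integrand (.mul ℝ ℝ) htail
      (hnear.integrable_indicator measurableSet_ball)).mono_measure
      (Measure.prod_mono Measure.restrict_le_self le_rfl)
  refine ((hfar.const_mul (R ^ (-β))).add (hconv.const_mul (R ^ (-γ)))).mono'
    (Measurable.aestronglyMeasurable (by unfold tailCorr; fun_prop)) ?_
  refine (ae_restrict_iff' (measurableSet_ball.compl.prod measurableSet_ball.compl)).mpr
    (.of_forall fun p hp => ?_)
  rw [norm_of_nonneg (tailCorr_nonneg γ β p)]
  exact tailCorr_le hβ ((Nat.cast_nonneg _).trans hγ.le) hR hp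

theorem setIntegral_tailCorr (γ β : ℝ) (hR : 0 < R) :
    ∫ p in (ball (0 : E) R)ᶜ ×ˢ (ball (0 : E) R)ᶜ, tailCorr γ β p ∂μ.prod μ =
      R ^ (2 * finrank ℝ E - (2 * γ + β)) *
        ∫ p in (ball (0 : E) 1)ᶜ ×ˢ (ball (0 : E) 1)ᶜ, tailCorr γ β p ∂μ.prod μ := by
  have hset : (ball (0 : E) R)ᶜ ×ˢ (ball (0 : E) R)ᶜ =
      R • (ball (0 : E) 1)ᶜ ×ˢ (ball (0 : E) 1)ᶜ := by
    ext p
    simp [mem_smul_set_iff_inv_smul_mem₀ hR.ne', norm_smul, abs_of_pos hR, le_inv_mul_iff₀ hR]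
  have hscale := Measure.setIntegral_comp_smul_of_pos (μ.prod μ) (tailCorr (E := E) γ β)
    ((ball (0 : E) 1)ᶜ ×ˢ (ball (0 : E) 1)ᶜ) hR
  simp only [tailCorr_smul hR, integral_const_mul, finrank_prod, ← hset, smul_eq_mul] at hscale
  rw [eq_inv_mul_iff_mul_eq₀ (by positivity)] at hscale
  rw [← hscale, ← mul_assoc, ← rpow_natCast, ← rpow_add hR]
  congr 2
  push_cast
  ring

theorem setIntegral_compl_ball_prod_sub_left (G : E × E → ℝ) (x : E) (R : ℝ) :
    ∫ p in (ball x R)ᶜ ×ˢ (ball x R)ᶜ, G (x - p.1, x - p.2) ∂μ.prod μ =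
      ∫ p in (ball 0 R)ᶜ ×ˢ (ball 0 R)ᶜ, G p ∂μ.prod μ := by
  have hpre : Prod.map (x - ·) (x - ·) ⁻¹' ((ball 0 R)ᶜ ×ˢ (ball 0 R)ᶜ) =
      (ball x R)ᶜ ×ˢ (ball x R)ᶜ := by
    ext p
    simp [dist_eq_norm, norm_sub_rev]
  rw [← hpre]
  have hsub : MeasurePreserving (x - ·) μ μ := Measure.measurePreserving_sub_left μ x
  have hemb : MeasurableEmbedding (x - ·) := (MeasurableEquiv.subLeft x).measurableEmbedding
  exact (hsub.prod hsub).setIntegral_preimage_emb (hemb.prodMap hemb) G _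

theorem setIntegral_corr_le_of_abs_le {k : E → ℝ} {K : ℝ} (hK : 0 ≤ K)
    (hk : ∀ u ≠ 0, |k u| ≤ K * ‖u‖ ^ (-γ)) (hγ : finrank ℝ E < γ) (hβ : 0 ≤ β)
    (hβE : β < finrank ℝ E) (x : E) (hR : 0 < R) :
    ∫ p in (ball x R)ᶜ ×ˢ (ball x R)ᶜ, k (x - p.1) * k (x - p.2) * ‖p.1 - p.2‖ ^ (-β) ∂μ.prod μ ≤
      K ^ 2 * (R ^ (2 * finrank ℝ E - (2 * γ + β)) *
        ∫ p in (ball (0 : E) 1)ᶜ ×ˢ (ball (0 : E) 1)ᶜ, tailCorr γ β p ∂μ.prod μ) := by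
  have hdom : ∀ p ∈ (ball (0 : E) R)ᶜ ×ˢ (ball (0 : E) R)ᶜ,
      ‖k p.1 * k p.2 * ‖p.1 - p.2‖ ^ (-β)‖ ≤ K ^ 2 * tailCorr γ β p := by
    intro p hp
    obtain ⟨hp1, hp2⟩ : R ≤ ‖p.1‖ ∧ R ≤ ‖p.2‖ := by simpa using hp
    calc ‖k p.1 * k p.2 * ‖p.1 - p.2‖ ^ (-β)‖ = |k p.1| * |k p.2| * ‖p.1 - p.2‖ ^ (-β) := by
          rw [norm_mul, norm_mul, norm_of_nonneg (by positivity : 0 ≤ ‖p.1 - p.2‖ ^ (-β)),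
            norm_eq_abs, norm_eq_abs]
      _ ≤ (K * ‖p.1‖ ^ (-γ)) * (K * ‖p.2‖ ^ (-γ)) * ‖p.1 - p.2‖ ^ (-β) := by
          gcongr
          · exact hk _ (norm_pos_iff.mp (hR.trans_le hp1))
          · exact hk _ (norm_pos_iff.mp (hR.trans_le hp2))
      _ = K ^ 2 * tailCorr γ β p := by
          rw [tailCorr]
          ring
  calc ∫ p in (ball x R)ᶜ ×ˢ (ball x R)ᶜ, k (x - p.1) * k (x - p.2) * ‖p.1 - p.2‖ ^ (-β) ∂μ.prod μ
      = ∫ p in (ball 0 R)ᶜ ×ˢ (ball 0 R)ᶜ, k p.1 * k p.2 * ‖p.1 - p.2‖ ^ (-β) ∂μ.prod μ := by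
        rw [← setIntegral_compl_ball_prod_sub_left μ _ x R]
        simp only [sub_sub_sub_cancel_left, norm_sub_rev]
    _ ≤ ∫ p in (ball 0 R)ᶜ ×ˢ (ball 0 R)ᶜ, K ^ 2 * tailCorr γ β p ∂μ.prod μ := by
        refine (le_norm_self _).trans (norm_integral_le_of_norm_le
          ((integrableOn_tailCorr μ hγ hβ hβE hR).const_mul _) ?_)
        exact (ae_restrict_iff' (measurableSet_ball.compl.prod measurableSet_ball.compl)).mpr
          (.of_forall hdom)
    _ = K ^ 2 * (R ^ (2 * finrank ℝ E - (2 * γ + β)) *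
        ∫ p in (ball (0 : E) 1)ᶜ ×ˢ (ball (0 : E) 1)ᶜ, tailCorr γ β p ∂μ.prod μ) := by
        rw [integral_const_mul, setIntegral_tailCorr μ γ β hR]

end TailCorr

theorem heat_corr_offBall_offBall_general (d : ℕ) (ν α β : ℝ) (hν : 0 < ν) (hα : 0 < α)
    (hα2 : α ≤ 2) (hβ : 0 ≤ β) (hβd : β < d) :
    ∃ c₁ > (0 : ℝ), ∀ (t : ℝ), 0 < t → ∀ (x : EuclideanSpace ℝ (Fin d)) (R : ℝ), 0 < R →
      (∫ yw in (Metric.ball x R)ᶜ ×ˢ (Metric.ball x R)ᶜ,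
          stableKernel d ν α t (x - yw.1) * stableKernel d ν α t (x - yw.2) *
            ‖yw.1 - yw.2‖ ^ (-β))
        ≤ c₁ * t ^ 2 / R ^ (2 * α + β) := by
  obtain ⟨K, hK, hkernel⟩ := exists_abs_stableKernel_le d hν hα hα2
  have hdim : finrank ℝ (EuclideanSpace ℝ (Fin d)) = d := finrank_euclideanSpace_fin
  set I := ∫ p in (ball (0 : EuclideanSpace ℝ (Fin d)) 1)ᶜ ×ˢ (ball 0 1)ᶜ, tailCorr (d + α) β p
  have hI : 0 ≤ I := integral_nonneg (tailCorr_nonneg _ _)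
  refine ⟨K ^ 2 * (I + 1), by positivity, fun t ht x R hR => ?_⟩
  have hcorr := setIntegral_corr_le_of_abs_le volume (by positivity) (hkernel t ht)
    (by simpa [hdim] using hα) hβ (by rwa [hdim]) x hR
  rw [hdim, show 2 * (d : ℝ) - (2 * (d + α) + β) = -(2 * α + β) by ring, rpow_neg hR.le] at hcorr
  calc _ ≤ (K * t) ^ 2 * ((R ^ (2 * α + β))⁻¹ * I) := hcorr
    _ ≤ (K * t) ^ 2 * ((R ^ (2 * α + β))⁻¹ * (I + 1)) := by gcongr; linarith
    _ = K ^ 2 * (I + 1) * t ^ 2 / R ^ (2 * α + β) := by ring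

/-- Lemma 2.2(a): for `0 < β < min(α,d)` there is `c₁ > 0` with
`∫_{B(x,R)ᶜ × B(x,R)ᶜ} p_t(x-y) p_t(x-w) |y-w|^{-β} dy dw ≤ c₁ t² / R^{2α+β}`. -/
theorem heat_corr_offBall_offBall (d : ℕ) (hd : 1 ≤ d) (ν α β : ℝ) (hν : 0 < ν)
    (hα : 0 < α) (hα2 : α ≤ 2) (hβ : 0 < β) (hβα : β < α) (hβd : β < d) :
    ∃ c₁ > (0 : ℝ), ∀ (t : ℝ), 0 < t → ∀ (x : EuclideanSpace ℝ (Fin d)) (R : ℝ), 0 < R →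
      (∫ yw in (Metric.ball x R)ᶜ ×ˢ (Metric.ball x R)ᶜ,
          stableKernel d ν α t (x - yw.1) * stableKernel d ν α t (x - yw.2) *
            ‖yw.1 - yw.2‖ ^ (-β))
        ≤ c₁ * t ^ 2 / R ^ (2 * α + β) :=
  heat_corr_offBall_offBall_general d ν α β hν hα hα2 hβ.le hβd
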